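/- arXiv:2403.07629 — 2 statements merged into one kernel-verified Lean document; each statement's English description precedes it below -/
import Mathlib

section
/- For each odd n ≥ 1, in the regular locally transitive tournament RLT_n the number c_8^{(2)}(RLT_n,0) of closed walks of length 8 starting and ending at vertex 0 that contain exactly one occurrence of 0 as an intermediate vertex and no other repeated vertices equals (n+1)(n−1)(n−3)(n−5)(85n²−646n+837)/5760. -/
/-- The dominance relation of the regular locally transitive tournament `RLT_n`
on `ZMod n` (for odd `n`). -/
def rltAdj (n : ℕ) (i j : ZMod n) : Prop :=
  (j - i).val ∈ Finset.Icc 1 ((n - 1) / 2)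

/-- A closed walk of length 8 from `o` to `o` whose only repeated vertex is `o`, which occurs
exactly once as an intermediate vertex. -/
def IsDoubleCycle {V : Type*} (adj : V → V → Prop) (o : V) (v : Fin 9 → V) : Prop :=
  v 0 = o ∧ v 8 = o ∧
    (∀ k : Fin 8, adj (v k.castSucc) (v k.succ)) ∧
    (∃! k : Fin 9, 0 < (k : ℕ) ∧ (k : ℕ) < 8 ∧ v k = o) ∧
    (∀ k l : Fin 9, k ≠ l → v k = v l → v k = o)

lemma isDoubleCycle_comp_iff {V W : Type*} {adj : V → V → Prop} {adj' : W → W → Prop} {o : V}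
    {f : V → W} {v : Fin 9 → V} {s : Set V} (ho : o ∈ s) (hv : ∀ k, v k ∈ s)
    (hf : Set.InjOn f s) (hadj : ∀ x ∈ s, ∀ y ∈ s, (adj' (f x) (f y) ↔ adj x y)) :
    IsDoubleCycle adj' (f o) (f ∘ v) ↔ IsDoubleCycle adj o v := by
  simp [IsDoubleCycle, hf.eq_iff (hv _) (hv _), hf.eq_iff (hv _) ho,
    hadj _ (hv _) _ (hv _)]

/-! ### A universal model on the integers -/

/-- A tournament on `ℤ` whose restriction to `[-m, m]` is isomorphic to `RLT_{2m+1}`. -/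
def intAdj (x y : ℤ) : Prop :=
  (0 ≤ x ∧ 0 ≤ y ∧ x < y) ∨ (x < 0 ∧ y < 0 ∧ y < x) ∨
    (0 ≤ x ∧ y < 0 ∧ -y ≤ x) ∨ (x < 0 ∧ 0 ≤ y ∧ y < -x)

lemma rltAdj_iff (m : ℕ) (i j : ZMod (2 * m + 1)) :
    rltAdj (2 * m + 1) i j ↔
      (i.val < j.val ∧ j.val ≤ i.val + m) ∨ (j.val < i.val ∧ j.val + m < i.val) := by
  have hi := ZMod.val_lt i
  have hj := ZMod.val_lt j
  have hm : (2 * m + 1 - 1) / 2 = m := by omega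
  rw [rltAdj, hm, Finset.mem_Icc]
  rcases le_or_gt i.val j.val with h | h
  · rw [ZMod.val_sub h]
    omega
  · have hne : i - j ≠ 0 := by
      rintro h0
      rw [sub_eq_zero.mp h0] at h
      omega
    have : NeZero (i - j) := ⟨hne⟩
    rw [← neg_sub i j, ZMod.val_neg_of_ne_zero, ZMod.val_sub h.le]
    omega

/-- The isomorphism from the restriction of `intAdj` to `[-m, m]` onto `RLT_{2m+1}`. -/
def toRLT (m : ℕ) (x : ℤ) : ZMod (2 * m + 1) :=
  ((if 0 ≤ x then x.natAbs else m + x.natAbs : ℕ) : ZMod (2 * m + 1))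

lemma toRLT_zero (m : ℕ) : toRLT m 0 = 0 := by simp [toRLT]

lemma val_toRLT {m : ℕ} {x : ℤ} (hx : x ∈ Set.Icc (-m : ℤ) m) :
    (toRLT m x).val = if 0 ≤ x then x.natAbs else m + x.natAbs := by
  obtain ⟨h1, h2⟩ := hx
  rw [toRLT, ZMod.val_natCast, Nat.mod_eq_of_lt]
  split_ifs <;> omega

lemma toRLT_injOn (m : ℕ) : Set.InjOn (toRLT m) (Set.Icc (-m : ℤ) m) := by
  intro x hx y hy h
  have h' := congrArg ZMod.val h
  rw [val_toRLT hx, val_toRLT hy] at h'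
  obtain ⟨h1, h2⟩ := hx
  obtain ⟨h3, h4⟩ := hy
  split_ifs at h' <;> omega

lemma toRLT_surjOn (m : ℕ) (a : ZMod (2 * m + 1)) :
    ∃ x ∈ Set.Icc (-m : ℤ) m, toRLT m x = a := by
  have ha := ZMod.val_lt a
  rcases le_or_gt a.val m with h | h
  · refine ⟨a.val, ⟨by omega, by omega⟩, ?_⟩
    rw [toRLT, if_pos (by omega), Int.natAbs_natCast, ZMod.natCast_zmod_val]
  · refine ⟨m - a.val, ⟨by omega, by omega⟩, ?_⟩
    have h1 : ¬ (0 ≤ (m : ℤ) - a.val) := by omega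
    have h2 : m + ((m : ℤ) - a.val).natAbs = a.val := by omega
    rw [toRLT, if_neg h1, h2, ZMod.natCast_zmod_val]

lemma rltAdj_toRLT_iff {m : ℕ} {x y : ℤ} (hx : x ∈ Set.Icc (-m : ℤ) m)
    (hy : y ∈ Set.Icc (-m : ℤ) m) :
    rltAdj (2 * m + 1) (toRLT m x) (toRLT m y) ↔ intAdj x y := by
  rw [rltAdj_iff, val_toRLT hx, val_toRLT hy, intAdj]
  obtain ⟨h1, h2⟩ := hx
  obtain ⟨h3, h4⟩ := hy
  split_ifs <;> omega

open Classical in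
/-- The walks of the integer model that stay inside `[-m, m]`. -/
noncomputable def intWalks (m : ℕ) : Finset (Fin 9 → ℤ) :=
  {v ∈ Fintype.piFinset fun _ => Finset.Icc (-m : ℤ) m | IsDoubleCycle intAdj 0 v}

lemma mem_intWalks {m : ℕ} {v : Fin 9 → ℤ} :
    v ∈ intWalks m ↔ (∀ k, v k ∈ Set.Icc (-m : ℤ) m) ∧ IsDoubleCycle intAdj 0 v := by
  simp [intWalks]

lemma card_rlt_walks (m : ℕ) :
    Nat.card {v : Fin 9 → ZMod (2 * m + 1) // IsDoubleCycle (rltAdj (2 * m + 1)) 0 v} =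
      (intWalks m).card := by
  have h0 : (0 : ℤ) ∈ Set.Icc (-m : ℤ) m := by simp
  have key : ∀ v : Fin 9 → ℤ, (∀ k, v k ∈ Set.Icc (-m : ℤ) m) →
      (IsDoubleCycle (rltAdj (2 * m + 1)) 0 (toRLT m ∘ v) ↔ IsDoubleCycle intAdj 0 v) := by
    intro v hv
    rw [← toRLT_zero m]
    exact isDoubleCycle_comp_iff h0 hv (toRLT_injOn m)
      fun x hx y hy => rltAdj_toRLT_iff hx hy
  rw [← Nat.card_eq_finsetCard]
  symm
  refine Nat.card_congr (Equiv.ofBijective (fun v => ⟨toRLT m ∘ v.1, ?_⟩) ⟨?_, ?_⟩)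
  · obtain ⟨hv, hw⟩ := mem_intWalks.mp v.2
    exact (key _ hv).mpr hw
  · rintro ⟨v, hv⟩ ⟨w, hw⟩ h
    rw [mem_intWalks] at hv hw
    ext k
    exact toRLT_injOn m (hv.1 k) (hw.1 k) (congrFun (congrArg Subtype.val h) k)
  · rintro ⟨w, hw⟩
    choose v hv hvw using fun k => toRLT_surjOn m (w k)
    have hcomp : toRLT m ∘ v = w := funext hvw
    subst hcomp
    exact ⟨⟨v, mem_intWalks.mpr ⟨hv, (key _ hv).mp hw⟩⟩, rfl⟩

/-! ### Grouping walks by the absolute values of their vertices -/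

/-- The absolute values of the nonzero vertices of a walk. -/
def walkSupport (v : Fin 9 → ℤ) : Finset ℕ :=
  (Finset.univ.image fun k => (v k).natAbs).erase 0

lemma natAbs_mem_insert_walkSupport (v : Fin 9 → ℤ) (k : Fin 9) :
    (v k).natAbs ∈ insert 0 (walkSupport v) := by
  simp only [walkSupport, Finset.mem_insert, Finset.mem_erase, Finset.mem_image,
    Finset.mem_univ, true_and]
  by_cases h : (v k).natAbs = 0
  · exact Or.inl h
  · exact Or.inr ⟨h, k, rfl⟩

lemma card_walkSupport_le {adj : ℤ → ℤ → Prop} {v : Fin 9 → ℤ} (hv : IsDoubleCycle adj 0 v) :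
    (walkSupport v).card ≤ 6 := by
  obtain ⟨h0, h8, -, ⟨k, ⟨hk0, hk8, hk⟩, -⟩, -⟩ := hv
  have hsub : walkSupport v ⊆
      (((Finset.univ.erase (0 : Fin 9)).erase 8).erase k).image fun k => (v k).natAbs := by
    intro x hx
    simp only [walkSupport, Finset.mem_erase, Finset.mem_image, Finset.mem_univ, true_and] at hx
    obtain ⟨hx0, i, rfl⟩ := hx
    refine Finset.mem_image_of_mem _ ?_
    simp only [Finset.mem_erase, Finset.mem_univ, and_true]
    refine ⟨?_, ?_, ?_⟩ <;> rintro rfl <;> simp_all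
  refine (Finset.card_le_card hsub).trans (Finset.card_image_le.trans ?_)
  rw [Finset.card_erase_of_mem, Finset.card_erase_of_mem, Finset.card_erase_of_mem]
  · simp
  · simp
  · simp
  · simp only [Finset.mem_erase, Finset.mem_univ, and_true]
    refine ⟨?_, ?_⟩ <;> rintro rfl <;> simp_all

/-- The odd extension to `ℤ` of a map `ℕ → ℕ` fixing `0`. -/
def oddExtend (e : ℕ → ℕ) (x : ℤ) : ℤ :=
  if 0 ≤ x then e x.natAbs else -(e x.natAbs)

lemma natAbs_oddExtend (e : ℕ → ℕ) (x : ℤ) : (oddExtend e x).natAbs = e x.natAbs := by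
  unfold oddExtend
  split_ifs <;> simp

lemma oddExtend_zero {e : ℕ → ℕ} (h0 : e 0 = 0) : oddExtend e 0 = 0 := by
  simp [oddExtend, h0]

lemma oddExtend_nonneg_iff {e : ℕ → ℕ} (he : StrictMono e) (h0 : e 0 = 0) (x : ℤ) :
    0 ≤ oddExtend e x ↔ 0 ≤ x := by
  unfold oddExtend
  split_ifs with h
  · simp [h]
  · have : e 0 < e x.natAbs := he (by omega)
    omega

lemma oddExtend_injective {e : ℕ → ℕ} (he : StrictMono e) (h0 : e 0 = 0) :
    Function.Injective (oddExtend e) := by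
  intro x y h
  have h1 := congrArg Int.natAbs h
  rw [natAbs_oddExtend, natAbs_oddExtend] at h1
  have h2 := he.injective h1
  have h3 := oddExtend_nonneg_iff he h0 x
  rw [h, oddExtend_nonneg_iff he h0] at h3
  omega

lemma intAdj_oddExtend_iff {e : ℕ → ℕ} (he : StrictMono e) (h0 : e 0 = 0) (x y : ℤ) :
    intAdj (oddExtend e x) (oddExtend e y) ↔ intAdj x y := by
  have hx := oddExtend_nonneg_iff he h0 x
  have hy := oddExtend_nonneg_iff he h0 y
  have hx' := natAbs_oddExtend e x
  have hy' := natAbs_oddExtend e y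
  have h1 := he.lt_iff_lt (a := x.natAbs) (b := y.natAbs)
  have h2 := he.lt_iff_lt (a := y.natAbs) (b := x.natAbs)
  unfold intAdj
  omega

lemma exists_strictMono_image_Icc (S : Finset ℕ) (hS : 0 ∉ S) :
    ∃ e : ℕ → ℕ, StrictMono e ∧ e 0 = 0 ∧ (Finset.Icc 1 S.card).image e = S := by
  induction S using Finset.induction_on_max with
  | empty => exact ⟨id, strictMono_id, rfl, by simp⟩
  | insert a S ha ih =>
    have haS : a ∉ S := fun h => lt_irrefl _ (ha a h)
    simp only [Finset.mem_insert, not_or] at hS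
    obtain ⟨e, he, he0, heS⟩ := ih hS.2
    have hlt : e S.card < a := by
      rcases Nat.eq_zero_or_pos S.card with h | h
      · rw [h, he0]
        omega
      · refine ha _ ?_
        rw [← heS]
        exact Finset.mem_image_of_mem _ (Finset.mem_Icc.mpr ⟨by rwa [heS], by rw [heS]⟩)
    refine ⟨fun i => if i ≤ S.card then e i else a + (i - S.card - 1), ?_, by simp [he0], ?_⟩
    · refine strictMono_nat_of_lt_succ fun i => ?_
      have := he (Nat.lt_succ_self i)
      rcases lt_trichotomy i S.card with h | h | h
      · simpa [h.le, Nat.succ_le_of_lt h] using this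
      · simp [h, hlt]
      · rw [if_neg (by omega), if_neg (by omega)]
        omega
    · rw [Finset.card_insert_of_notMem haS, ← Finset.insert_Icc_right_eq_Icc_add_one (by omega),
        Finset.image_insert]
      congr 1
      · simp
      · conv_rhs => rw [← heS]
        refine Finset.image_congr fun i hi => ?_
        simp only [Finset.coe_Icc, Set.mem_Icc] at hi
        simp [hi.2]

/-- The walks of the integer model with prescribed support. -/
def supportedWalks (S : Finset ℕ) : Set (Fin 9 → ℤ) :=
  {v | IsDoubleCycle intAdj 0 v ∧ walkSupport v = S}

lemma walkSupport_oddExtend {e : ℕ → ℕ} (he : StrictMono e) (h0 : e 0 = 0) (v : Fin 9 → ℤ) :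
    walkSupport (oddExtend e ∘ v) = (walkSupport v).image e := by
  have : (fun k => ((oddExtend e ∘ v) k).natAbs) = e ∘ fun k => (v k).natAbs :=
    funext fun k => natAbs_oddExtend e (v k)
  rw [walkSupport, this, ← Finset.image_image, walkSupport]
  conv_lhs => rw [← h0]
  rw [Finset.image_erase he.injective]

lemma ncard_supportedWalks {S : Finset ℕ} (hS : 0 ∉ S) :
    (supportedWalks S).ncard = (supportedWalks (Finset.Icc 1 S.card)).ncard := by
  obtain ⟨e, he, h0, heS⟩ := exists_strictMono_image_Icc S hS
  have hinj := oddExtend_injective he h0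
  have key : ∀ v : Fin 9 → ℤ,
      IsDoubleCycle intAdj 0 (oddExtend e ∘ v) ↔ IsDoubleCycle intAdj 0 v := by
    intro v
    conv_lhs => rw [← oddExtend_zero h0]
    exact isDoubleCycle_comp_iff (s := Set.univ) trivial (fun _ => trivial) hinj.injOn
      fun x _ y _ => intAdj_oddExtend_iff he h0 x y
  have himage : supportedWalks S =
      (fun v => oddExtend e ∘ v) '' supportedWalks (Finset.Icc 1 S.card) := by
    ext w
    constructor
    · rintro ⟨hw, hwS⟩
      have hpre : ∀ k, ∃ x, oddExtend e x = w k := by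
        intro k
        have hk := natAbs_mem_insert_walkSupport w k
        obtain ⟨i, hi⟩ : ∃ i, e i = (w k).natAbs := by
          rcases Finset.mem_insert.mp hk with h | h
          · exact ⟨0, by rw [h0, h]⟩
          · rw [hwS, ← heS] at h
            obtain ⟨i, -, hi⟩ := Finset.mem_image.mp h
            exact ⟨i, hi⟩
        rcases le_or_gt 0 (w k) with h | h
        · refine ⟨i, ?_⟩
          simp only [oddExtend, Int.natAbs_natCast, hi]
          split_ifs <;> omega
        · refine ⟨-i, ?_⟩
          have : i ≠ 0 := by
            rintro rfl
            omega
          simp only [oddExtend, Int.natAbs_neg, Int.natAbs_natCast, hi]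
          split_ifs <;> omega
      choose v hv using hpre
      have hcomp : oddExtend e ∘ v = w := funext hv
      subst hcomp
      refine ⟨v, ⟨(key v).mp hw, ?_⟩, rfl⟩
      rw [walkSupport_oddExtend he h0, ← heS] at hwS
      exact Finset.image_injective he.injective hwS
    · rintro ⟨v, ⟨hv, hvS⟩, rfl⟩
      refine ⟨(key v).mpr hv, ?_⟩
      rw [walkSupport_oddExtend he h0, hvS, heS]
  rw [himage, Set.ncard_image_of_injective]
  intro v w h
  exact funext fun k => hinj (congrFun h k)

lemma ncard_supportedWalks_eq_zero {S : Finset ℕ} (hS : 6 < S.card) :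
    (supportedWalks S).ncard = 0 := by
  have : supportedWalks S = ∅ := by
    refine Set.eq_empty_of_forall_notMem ?_
    rintro v ⟨hv, rfl⟩
    exact absurd (card_walkSupport_le hv) (by omega)
  rw [this, Set.ncard_empty]

/-- The number of walks is a polynomial of degree at most 6 in `m`, written in the binomial
basis. -/
lemma card_intWalks (m : ℕ) :
    (intWalks m).card =
      ∑ j ∈ Finset.range 7, m.choose j * (supportedWalks (Finset.Icc 1 j)).ncard := by
  classical
  have hmaps : ∀ v ∈ intWalks m, walkSupport v ∈ (Finset.Icc 1 m).powerset := by
    intro v hv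
    rw [Finset.mem_powerset]
    intro x hx
    simp only [walkSupport, Finset.mem_erase, Finset.mem_image, Finset.mem_univ, true_and] at hx
    obtain ⟨hx0, k, rfl⟩ := hx
    have := (mem_intWalks.mp hv).1 k
    rw [Set.mem_Icc] at this
    rw [Finset.mem_Icc]
    omega
  have hfiber : ∀ S ∈ (Finset.Icc 1 m).powerset,
      ({v ∈ intWalks m | walkSupport v = S} : Finset _).card =
        (supportedWalks (Finset.Icc 1 S.card)).ncard := by
    intro S hS
    rw [Finset.mem_powerset] at hS
    have h0 : 0 ∉ S := fun h => by simpa using hS h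
    rw [← ncard_supportedWalks h0, ← Set.ncard_coe_finset]
    congr 1
    ext v
    simp only [Finset.coe_filter, Set.mem_ofPred_eq, mem_intWalks, supportedWalks]
    refine ⟨fun h => ⟨h.1.2, h.2⟩, fun h => ⟨⟨fun k => ?_, h.1⟩, h.2⟩⟩
    have hk := natAbs_mem_insert_walkSupport v k
    rw [h.2, Finset.mem_insert] at hk
    rw [Set.mem_Icc]
    rcases hk with hk | hk
    · omega
    · have := Finset.mem_Icc.mp (hS hk)
      omega
  rw [Finset.card_eq_sum_card_fiberwise hmaps, Finset.sum_congr rfl hfiber,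
    Finset.sum_powerset_apply_card (fun j => (supportedWalks (Finset.Icc 1 j)).ncard),
    Nat.card_Icc, Nat.add_sub_cancel]
  simp only [smul_eq_mul]
  have hle : ∀ a b, a ≤ b → (∀ j, a ≤ j →
      m.choose j * (supportedWalks (Finset.Icc 1 j)).ncard = 0) →
      ∑ j ∈ Finset.range a, m.choose j * (supportedWalks (Finset.Icc 1 j)).ncard =
        ∑ j ∈ Finset.range b, m.choose j * (supportedWalks (Finset.Icc 1 j)).ncard := by
    intro a b hab h
    refine Finset.sum_subset (Finset.range_mono hab) fun j _ hj => h j ?_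
    simpa using hj
  rcases le_total (m + 1) 7 with h | h
  · exact hle _ _ h fun j hj => by rw [Nat.choose_eq_zero_of_lt (by omega), zero_mul]
  · refine (hle _ _ h fun j hj => ?_).symm
    rw [ncard_supportedWalks_eq_zero (by rw [Nat.card_Icc]; omega), mul_zero]

/-! ### Counting walks in a fixed tournament -/

/-- The sum `f 1 + ⋯ + f k`. -/
def sumUpTo (f : ℕ → ℕ) : ℕ → ℕ
  | 0 => 0
  | s + 1 => sumUpTo f s + f (s + 1)

/-- The number of ways to continue a walk in `RLT_{2m+1}` from `cur`, where the list tells which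
of the following vertices are `0` and the others are to avoid each other and the vertices in the
bit mask. -/
def walkCount (m : ℕ) : List Bool → ℕ → ℕ → ℕ
  | [], _, _ => 1
  | true :: p, mask, cur => if m < cur then walkCount m p mask 0 else 0
  | false :: p, mask, cur => sumUpTo (fun s =>
      if mask.testBit ((cur + s) % (2 * m + 1)) then 0 else
      walkCount m p (mask ||| 2 ^ ((cur + s) % (2 * m + 1))) ((cur + s) % (2 * m + 1))) m

/-- The walks counted by `walkCount`. -/
def IsContinuation (m : ℕ) (p : List Bool) (mask : ℕ) (cur : ZMod (2 * m + 1))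
    (w : Fin p.length → ZMod (2 * m + 1)) : Prop :=
  (∀ i, rltAdj (2 * m + 1) ((Fin.cons cur w : Fin (p.length + 1) → ZMod (2 * m + 1)) i.castSucc)
    (w i)) ∧
  (∀ i, if p.get i then w i = 0 else mask.testBit (w i).val = false) ∧
  (∀ i j, i ≠ j → w i = w j → w i = 0)

lemma isContinuation_true_cons {m : ℕ} {p : List Bool} {mask : ℕ} {cur a : ZMod (2 * m + 1)}
    {w : Fin p.length → ZMod (2 * m + 1)} :
    IsContinuation m (true :: p) mask cur (Fin.cons a w) ↔
      rltAdj (2 * m + 1) cur a ∧ a = 0 ∧ IsContinuation m p mask a w := by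
  unfold IsContinuation
  simp only [List.length_cons, Fin.forall_fin_succ (n := p.length), Fin.castSucc_zero,
    Fin.cons_zero, Fin.cons_succ, Fin.castSucc_succ, List.get_cons_zero, List.get_cons_succ']
  constructor
  · rintro ⟨⟨h1, h2⟩, ⟨h3, h4⟩, -, h5⟩
    exact ⟨h1, by simpa using h3, h2, h4, fun i j hij h =>
      (h5 i).2 j (fun e => hij (Fin.succ_injective _ e)) h⟩
  · rintro ⟨h1, h2, h3, h4, h5⟩
    exact ⟨⟨h1, h3⟩, ⟨by simpa using h2, h4⟩, ⟨fun _ _ => h2, fun _ _ _ => h2⟩,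
      fun i => ⟨fun _ h => h.trans h2, fun j hij h => h5 i j (fun e => hij (congrArg _ e)) h⟩⟩

lemma isContinuation_false_cons {m : ℕ} {p : List Bool} {mask : ℕ} {cur a : ZMod (2 * m + 1)}
    {w : Fin p.length → ZMod (2 * m + 1)} (hmask : mask.testBit 0) :
    IsContinuation m (false :: p) mask cur (Fin.cons a w) ↔
      rltAdj (2 * m + 1) cur a ∧ mask.testBit a.val = false ∧
        IsContinuation m p (mask ||| 2 ^ a.val) a w := by
  unfold IsContinuation
  simp only [List.length_cons, Fin.forall_fin_succ (n := p.length), Fin.castSucc_zero,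
    Fin.cons_zero, Fin.cons_succ, Fin.castSucc_succ, List.get_cons_zero, List.get_cons_succ']
  constructor
  · rintro ⟨⟨h1, h2⟩, ⟨h3, h4⟩, -, h5⟩
    refine ⟨h1, by simpa using h3, h2, fun i => ?_, fun i j hij h =>
      (h5 i).2 j (fun e => hij (Fin.succ_injective _ e)) h⟩
    have hi := h4 i
    split_ifs at hi ⊢ with hp
    · exact hi
    · rw [Nat.testBit_or, hi, Bool.false_or, Nat.testBit_two_pow_of_ne]
      intro hval
      rw [(h5 i).1 (Fin.succ_ne_zero i) (ZMod.val_injective _ hval.symm), ZMod.val_zero,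
        hmask] at hi
      exact absurd hi (by simp)
  · rintro ⟨h1, h2, h3, h4, h5⟩
    have hne : ∀ i, a = w i → w i = 0 := by
      intro i hi
      have h := h4 i
      split_ifs at h with hp
      · exact h
      · simp [Nat.testBit_or, hi] at h
    refine ⟨⟨h1, h3⟩, ⟨by simpa using h2, fun i => ?_⟩,
      ⟨fun h => absurd rfl h, fun i _ h => h.trans (hne i h)⟩,
      fun i => ⟨fun _ h => hne i h.symm, fun j hij h => h5 i j (fun e => hij (congrArg _ e)) h⟩⟩
    have hi := h4 i
    split_ifs at hi ⊢ with hp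
    · exact hi
    · rw [Nat.testBit_or, Bool.or_eq_false_iff] at hi
      exact hi.1

lemma card_subtype_cons {V : Type*} [Fintype V] {r : ℕ} (P : (Fin (r + 1) → V) → Prop) :
    Nat.card {w // P w} = ∑ a : V, Nat.card {w : Fin r → V // P (Fin.cons a w)} := by
  rw [← Nat.card_sigma]
  exact Nat.card_congr
    { toFun := fun w => ⟨w.1 0, Fin.tail w.1, by rw [Fin.cons_self_tail]; exact w.2⟩
      invFun := fun x => ⟨Fin.cons x.1 x.2.1, x.2.2⟩
      left_inv := fun w => by simp
      right_inv := fun _ => rfl }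

lemma sum_out_neighbors (m : ℕ) (cur : ZMod (2 * m + 1)) (f : ℕ → ℕ)
    [DecidablePred (rltAdj (2 * m + 1) cur)] :
    ∑ a : ZMod (2 * m + 1), (if rltAdj (2 * m + 1) cur a then f a.val else 0) =
      sumUpTo (fun s => f ((cur.val + s) % (2 * m + 1))) m := by
  have hsum : ∀ (g : ℕ → ℕ) (k : ℕ), sumUpTo g k = ∑ s ∈ Finset.Icc 1 k, g s := by
    intro g k
    induction k with
    | zero => rfl
    | succ k ih => rw [sumUpTo, ih, Finset.sum_Icc_succ_top (by omega)]
  have hm : (2 * m + 1 - 1) / 2 = m := by omega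
  rw [hsum, ← Finset.sum_filter]
  refine Finset.sum_nbij' (fun a => (a - cur).val) (fun s => cur + s) ?_ ?_ ?_ ?_ ?_
  · intro a ha
    simpa [rltAdj, hm] using ha
  · intro s hs
    rw [Finset.mem_Icc] at hs
    simp [rltAdj, ZMod.val_natCast, Nat.mod_eq_of_lt (show s < 2 * m + 1 by omega), hs]
  · intro a _
    simp
  · intro s hs
    rw [Finset.mem_Icc] at hs
    simp [ZMod.val_natCast, Nat.mod_eq_of_lt (show s < 2 * m + 1 by omega)]
  · intro a _
    rw [← ZMod.val_add]
    simp

lemma card_isContinuation (m : ℕ) (p : List Bool) (mask : ℕ) (cur : ZMod (2 * m + 1))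
    (hmask : mask.testBit 0) :
    Nat.card {w // IsContinuation m p mask cur w} = walkCount m p mask cur.val := by
  classical
  induction p generalizing mask cur with
  | nil =>
    rw [walkCount, Nat.card_eq_one_iff_unique]
    exact ⟨⟨fun a b => Subtype.ext (funext fun i => i.elim0)⟩,
      ⟨Fin.elim0, fun i => i.elim0, fun i => i.elim0, fun i => i.elim0⟩⟩
  | cons b p ih =>
    have hcons := card_subtype_cons (V := ZMod (2 * m + 1)) (r := p.length)
      (IsContinuation m (b :: p) mask cur)
    refine hcons.trans ?_
    cases b with
    | true =>
      simp only [isContinuation_true_cons]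
      rw [Finset.sum_eq_single 0]
      · rw [walkCount, ← ZMod.val_zero (n := 2 * m + 1), ← ih _ _ hmask]
        have h : rltAdj (2 * m + 1) cur 0 ↔ m < cur.val := by
          rw [rltAdj_iff, ZMod.val_zero]
          omega
        split_ifs with hlt <;> simp [h, hlt]
      · intro a _ ha
        simp [ha]
      · simp
    | false =>
      simp only [isContinuation_false_cons hmask]
      rw [walkCount, ← sum_out_neighbors m cur fun a => if mask.testBit a then 0 else
        walkCount m p (mask ||| 2 ^ a) a]
      refine Finset.sum_congr rfl fun a _ => ?_
      rw [← ih _ _ (by rw [Nat.testBit_or, hmask, Bool.true_or])]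
      split_ifs with h1 h2 <;> simp [*]

/-- The pattern of zeros among the vertices `1, …, 8` of a walk whose intermediate zero has
index `k`. -/
def zeroPattern (k : ℕ) : List Bool :=
  [k == 1, k == 2, k == 3, k == 4, k == 5, k == 6, k == 7, true]

lemma zeroPattern_condition_iff (m : ℕ) (k : Fin 3) (w : Fin 8 → ZMod (2 * m + 1)) :
    (∀ i : Fin 8, if (zeroPattern (k + 3)).get i then w i = 0
      else Nat.testBit 1 (w i).val = false) ↔
      ∀ i : Fin 8, w i = 0 ↔ (i : ℕ) = k + 2 ∨ (i : ℕ) = 7 := by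
  have hget : ∀ (k : Fin 3) (i : Fin 8),
      (zeroPattern (k + 3)).get i = true ↔ ((i : ℕ) = k + 2 ∨ (i : ℕ) = 7) := by
    intro k i
    fin_cases k <;> fin_cases i <;> simp [zeroPattern]
  refine forall_congr' fun i => ?_
  rw [← hget k i]
  split_ifs with h
  · simp [h]
  · rw [← Bool.not_eq_true, Nat.testBit_one_eq_true_iff_self_eq_zero, ZMod.val_eq_zero]
    simp [h]

lemma isDoubleCycle_cons_iff (m : ℕ) (w : Fin 8 → ZMod (2 * m + 1)) :
    IsDoubleCycle (rltAdj (2 * m + 1)) 0 (Fin.cons 0 w : Fin 9 → ZMod (2 * m + 1)) ↔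
      ∃ k : Fin 3, IsContinuation m (zeroPattern (k + 3)) 1 0 w := by
  have hloop : ¬ rltAdj (2 * m + 1) 0 0 := by simp [rltAdj_iff]
  have hdigon : ∀ x, rltAdj (2 * m + 1) 0 x → ¬ rltAdj (2 * m + 1) x 0 := by
    intro x
    rw [rltAdj_iff, rltAdj_iff, ZMod.val_zero]
    omega
  constructor
  · rintro ⟨-, h8, hadj, ⟨k, ⟨hk0, hk8, hk⟩, huniq⟩, hpair⟩
    obtain ⟨j, rfl⟩ := Fin.exists_succ_eq.mpr (show k ≠ 0 by rintro rfl; simp at hk0)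
    have h7 : w 7 = 0 := h8
    rw [Fin.cons_succ] at hk
    rw [Fin.val_succ] at hk8
    have huniq' : ∀ i : Fin 8, (i : ℕ) < 7 → w i = 0 → i = j := by
      intro i hi hwi
      exact Fin.succ_injective _ (huniq i.succ ⟨by simp, by rw [Fin.val_succ]; omega, hwi⟩)
    have hj : 2 ≤ (j : ℕ) ∧ (j : ℕ) < 5 := by
      have a0 : rltAdj (2 * m + 1) 0 (w 0) := hadj 0
      have a1 : rltAdj (2 * m + 1) (w 0) (w 1) := hadj 1
      have a6 : rltAdj (2 * m + 1) (w 5) (w 6) := hadj 6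
      have a7 : rltAdj (2 * m + 1) (w 6) (w 7) := hadj 7
      rw [h7] at a7
      clear hpair huniq huniq' hadj
      fin_cases j
      · exact absurd (hk ▸ a0) hloop
      · exact absurd (hk ▸ a1) (hdigon _ a0)
      · simp
      · simp
      · simp
      · exact absurd a7 (hdigon _ (hk ▸ a6))
      · exact absurd (hk ▸ a7) hloop
      · simp at hk8
    refine ⟨⟨j - 2, by omega⟩, fun i => hadj i, ?_, fun i l hil h => ?_⟩
    · refine (zeroPattern_condition_iff m _ w).mpr fun i => ⟨fun hi => ?_, fun hi => ?_⟩
      · by_cases h : (i : ℕ) < 7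
        · rw [huniq' i h hi]
          simp only
          omega
        · omega
      · rcases hi with hi | hi
        · rw [← hk]
          congr 1
          simp only at hi
          omega
        · rw [← h7]
          congr 1
          omega
    · exact hpair i.succ l.succ (fun h => hil (Fin.succ_injective _ h)) h
  · rintro ⟨k, hadj, hpat, hpair⟩
    have hzero := (zeroPattern_condition_iff m k w).mp hpat
    refine ⟨rfl, (hzero 7).mpr (Or.inr rfl), fun i => hadj i,
      ⟨⟨k + 3, by omega⟩, ⟨by simp, by simp only; omega,
        (hzero ⟨k + 2, by omega⟩).mpr (Or.inl rfl)⟩, ?_⟩, ?_⟩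
    · rintro i ⟨hi0, hi8, hi⟩
      obtain ⟨j, rfl⟩ := Fin.exists_succ_eq.mpr (show i ≠ 0 by rintro rfl; simp at hi0)
      rw [Fin.cons_succ] at hi
      have := (hzero j).mp hi
      rw [Fin.val_succ] at hi8
      ext
      simp only [Fin.val_succ]
      omega
    · intro i l hil h
      rcases Fin.eq_zero_or_eq_succ i with rfl | ⟨i, rfl⟩
      · rfl
      rcases Fin.eq_zero_or_eq_succ l with rfl | ⟨l, rfl⟩
      · exact h
      · exact hpair i l (fun h => hil (congrArg _ h)) h

lemma card_rlt_walks_eq_walkCount (m : ℕ) :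
    Nat.card {v : Fin 9 → ZMod (2 * m + 1) // IsDoubleCycle (rltAdj (2 * m + 1)) 0 v} =
      walkCount m (zeroPattern 3) 1 0 + walkCount m (zeroPattern 4) 1 0 +
        walkCount m (zeroPattern 5) 1 0 := by
  have hsigma : Nat.card {v : Fin 9 → ZMod (2 * m + 1) //
      IsDoubleCycle (rltAdj (2 * m + 1)) 0 v} =
      Nat.card (Σ k : Fin 3, {w : Fin 8 → ZMod (2 * m + 1) //
        IsContinuation m (zeroPattern (k + 3)) 1 0 w}) := by
    symm
    refine Nat.card_congr (Equiv.ofBijective (fun x => ⟨Fin.cons 0 x.2.1,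
      (isDoubleCycle_cons_iff m _).mpr ⟨x.1, x.2.2⟩⟩) ⟨?_, ?_⟩)
    · rintro ⟨k, w, hw⟩ ⟨l, w', hw'⟩ h
      obtain rfl : w = w' :=
        Fin.cons_right_injective (α := fun _ => ZMod (2 * m + 1)) 0 (congrArg Subtype.val h)
      have hkl : k = l := by
        have h1 := (zeroPattern_condition_iff m k w).mp hw.2.1
        have h2 := (zeroPattern_condition_iff m l w).mp hw'.2.1
        have h3 := (h2 ⟨k + 2, by omega⟩).mp ((h1 ⟨k + 2, by omega⟩).mpr (Or.inl rfl))
        simp only at h3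
        omega
      subst hkl
      rfl
    · rintro ⟨v, hv⟩
      obtain ⟨w, rfl⟩ : ∃ w : Fin 8 → ZMod (2 * m + 1), Fin.cons 0 w = v :=
        ⟨Fin.tail v, by conv_lhs => rw [← hv.1]; exact Fin.cons_self_tail v⟩
      obtain ⟨k, hk⟩ := (isDoubleCycle_cons_iff m w).mp hv
      exact ⟨⟨k, w, hk⟩, rfl⟩
  have hcard : ∀ k : Fin 3, Nat.card {w : Fin 8 → ZMod (2 * m + 1) //
      IsContinuation m (zeroPattern (k + 3)) 1 0 w} = walkCount m (zeroPattern (k + 3)) 1 0 := by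
    intro k
    rw [← ZMod.val_zero (n := 2 * m + 1)]
    exact card_isContinuation m (zeroPattern (k + 3)) 1 0 rfl
  have hfin : ∀ k : Fin 3, Finite {w : Fin 8 → ZMod (2 * m + 1) //
      IsContinuation m (zeroPattern (k + 3)) 1 0 w} := fun k => Subtype.finite
  rw [hsigma, Nat.card_sigma, Fin.sum_univ_three, hcard, hcard, hcard]
  rfl

set_option maxRecDepth 100000 in
lemma walkCount_values :
    (List.range 7).map (fun m => walkCount m (zeroPattern 3) 1 0 +
      walkCount m (zeroPattern 4) 1 0 + walkCount m (zeroPattern 5) 1 0) =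
      [0, 0, 0, 32, 636, 4016, 15876] := by
  decide +kernel

lemma card_intWalks_polynomial (m : ℕ) :
    ((intWalks m).card : ℤ) = 32 * m.choose 3 + 508 * m.choose 4 + 1156 * m.choose 5 +
      680 * m.choose 6 := by
  obtain ⟨g, hg⟩ : ∃ g : ℕ → ℕ, ∀ m, (intWalks m).card =
      ∑ j ∈ Finset.range 7, m.choose j * g j := ⟨_, card_intWalks⟩
  have hvalues := walkCount_values
  simp only [← card_rlt_walks_eq_walkCount, card_rlt_walks, hg, List.range, List.range.loop,
    List.map, Finset.sum_range_succ, Finset.sum_range_zero] at hvalues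
  simp only [Nat.choose, List.cons.injEq, and_true] at hvalues
  obtain ⟨h0, h1, h2, h3, h4, h5, h6⟩ := hvalues
  have e0 : g 0 = 0 := by omega
  have e1 : g 1 = 0 := by omega
  have e2 : g 2 = 0 := by omega
  have e3 : g 3 = 32 := by omega
  have e4 : g 4 = 508 := by omega
  have e5 : g 5 = 1156 := by omega
  have e6 : g 6 = 680 := by omega
  rw [hg]
  simp only [Finset.sum_range_succ, Finset.sum_range_zero, e0, e1, e2, e3, e4, e5, e6]
  push_cast
  ring

lemma cast_choose_succ (m k : ℕ) :
    ((k : ℤ) + 1) * m.choose (k + 1) = (m - k) * m.choose k := by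
  rcases le_or_gt k m with h | h
  · have := Nat.choose_succ_right_eq m k
    zify [h] at this
    linarith
  · simp [Nat.choose_eq_zero_of_lt h, Nat.choose_eq_zero_of_lt (Nat.lt_succ_of_lt h)]

/-- `c_8^{(2)}(RLT_n, 0)`: closed walks of length 8 starting and ending at `0`,
containing exactly one occurrence of `0` as an intermediate vertex and no other
repeated vertices. -/
theorem closed_eight_walks_through_zero_of_RLT (n : ℕ) (hodd : Odd n) (hn : 1 ≤ n) :
    5760 * (Nat.card {v : Fin 9 → ZMod n //
        v 0 = 0 ∧ v 8 = 0 ∧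
        (∀ k : Fin 8, rltAdj n (v k.castSucc) (v k.succ)) ∧
        (∃! k : Fin 9, 0 < (k : ℕ) ∧ (k : ℕ) < 8 ∧ v k = 0) ∧
        (∀ k l : Fin 9, k ≠ l → v k = v l → v k = 0)} : ℤ)
      = ((n : ℤ) + 1) * ((n : ℤ) - 1) * ((n : ℤ) - 3) * ((n : ℤ) - 5) *
          (85 * (n : ℤ) ^ 2 - 646 * (n : ℤ) + 837) := by
  obtain ⟨m, rfl⟩ := hodd
  have hcard := card_rlt_walks m
  simp only [IsDoubleCycle] at hcard
  rw [hcard, card_intWalks_polynomial]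
  have h3 : (6 : ℤ) * m.choose 3 = m * (m - 1) * (m - 2) := by
    have h1 := cast_choose_succ m 1
    have h2 := cast_choose_succ m 2
    simp only [Nat.choose_one_right] at h1
    push_cast at h1 h2
    linear_combination 2 * h2 + ((m : ℤ) - 2) * h1
  have h4 := cast_choose_succ m 3
  have h5 := cast_choose_succ m 4
  have h6 := cast_choose_succ m 5
  push_cast at h4 h5 h6 ⊢
  linear_combination 652800 * h6 + (130560 * (m : ℤ) + 678912) * h5 +
    ((32640 * (m : ℤ) + 169728) * (m - 4) + 731520) * h4 +
    (((5440 * (m : ℤ) + 28288) * (m - 4) + 121920) * (m - 3) + 30720) * h3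
end

section
/- Let T be a doubly-regular tournament of order 4t+3 and let (j,i) be an arc of T (i.e., j→i). Then the number of directed walks of length 7 from i to j in T that are not paths (i.e., that repeat at least one vertex) equals 2t(t+1)(48t³+30t²−2t+1). -/
/-- A tournament on the vertex type `V`. -/
structure Tournament (V : Type*) where
  r : V → V → Prop
  dec : DecidableRel r
  irrefl : ∀ i, ¬ r i i
  total : ∀ i j, i ≠ j → (r i j ↔ ¬ r j i)

attribute [instance] Tournament.dec

/-- A doubly-regular tournament of order `4t+3`: every pair of distinct vertices
jointly dominates exactly `t` vertices. -/
def Tournament.IsDoublyRegular {V : Type*} (T : Tournament V) (t : ℕ) : Prop :=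
  ∀ i j : V, i ≠ j → Nat.card {k : V // T.r i k ∧ T.r j k} = t

/-- The value at `t` of the polynomial with the given list of coefficients. -/
def evalAt (t : ℤ) : List ℤ → ℤ
  | [] => 0
  | c :: p => c + t * evalAt t p

namespace Coeffs

/-- Addition of polynomials given by coefficient lists. -/
def add : List ℤ → List ℤ → List ℤ
  | [], q => q
  | c :: p, [] => c :: p
  | c :: p, d :: q => (c + d) :: add p q

/-- Multiplication of a coefficient list by a scalar. -/
def scale (c : ℤ) (p : List ℤ) : List ℤ := p.map (c * ·)

/-- Multiplication of polynomials given by coefficient lists. -/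
def mul : List ℤ → List ℤ → List ℤ
  | [], _ => []
  | c :: p, q => add (scale c q) (0 :: mul p q)

end Coeffs

open Coeffs

/-- A function of ordered pairs of vertices which depends only on whether the pair is equal,
an arc, or a reversed arc; the three values are polynomials in `t`. -/
structure Weight where
  diag : List ℤ
  fwd : List ℤ
  bwd : List ℤ

namespace Weight

/-- The constant weight `1`. -/
def one : Weight := ⟨[1], [1], [1]⟩

/-- The indicator of the arcs. -/
def arc : Weight := ⟨[], [1], []⟩

/-- The weight with its two arguments exchanged. -/
def swap (w : Weight) : Weight := ⟨w.diag, w.bwd, w.fwd⟩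

/-- The pointwise product. -/
def hadamard (w w' : Weight) : Weight :=
  ⟨mul w.diag w'.diag, mul w.fwd w'.fwd, mul w.bwd w'.bwd⟩

/-- The matrix product. -/
def comp (w w' : Weight) : Weight :=
  let m := add (mul w.fwd w'.bwd) (mul w.bwd w'.fwd)
  let f := mul w.fwd w'.fwd
  let b := mul w.bwd w'.bwd
  ⟨add (mul w.diag w'.diag) (mul [1, 2] m),
    add (add (mul w.diag w'.fwd) (mul w.fwd w'.diag))
      (add (mul [0, 1] (add f m)) (mul [1, 1] b)),
    add (add (mul w.diag w'.bwd) (mul w.bwd w'.diag))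
      (add (mul [0, 1] (add b m)) (mul [1, 1] f))⟩

end Weight

section Network

variable {ι : Type*} [DecidableEq ι]

/-- Separates the edges at `u` from the others: those to `p`, those to `q`, and the rest. -/
def splitAt (u p q : ι) : List (ι × ι × Weight) → Option (Weight × Weight × List (ι × ι × Weight))
  | [] => some (.one, .one, [])
  | (a, b, c) :: L => (splitAt u p q L).bind fun R =>
    if a = u then
      if b = u then some (R.1, R.2.1, (p, p, c) :: R.2.2)
      else if b = p then some (R.1.hadamard c, R.2.1, R.2.2)
      else if b = q then some (R.1, R.2.1.hadamard c, R.2.2)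
      else none
    else if b = u then
      if a = p then some (R.1.hadamard c.swap, R.2.1, R.2.2)
      else if a = q then some (R.1, R.2.1.hadamard c.swap, R.2.2)
      else none
    else some (R.1, R.2.1, (a, b, c) :: R.2.2)

/-- Series reduction: replaces the vertex `u` by an edge between its two neighbours `p`, `q`. -/
def seriesReduce (u p q : ι) (L : List (ι × ι × Weight)) : Option (List (ι × ι × Weight)) :=
  if p = u ∨ q = u then none
  else (splitAt u p q L).map fun R => (p, q, R.1.swap.comp R.2.1) :: R.2.2

/-- The neighbours of `u`. -/
def neighbours (u : ι) (L : List (ι × ι × Weight)) : List ι :=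
  (L.flatMap fun e => if e.1 = u then [e.2.1] else if e.2.1 = u then [e.1] else []).filter (· ≠ u)

/-- Eliminates the vertex `u` if it has one or two neighbours. -/
def eliminate (u : ι) (L : List (ι × ι × Weight)) : Option (List (ι × ι × Weight)) :=
  (neighbours u L).head?.bind fun p =>
    seriesReduce u p (((neighbours u L).filter (· ≠ p)).head?.getD p) L

/-- The value of a network on two vertices `i`, `j` joined by an arc from `j` to `i`. -/
def evalTwo (i j : ι) : List (ι × ι × Weight) → Option (List ℤ)
  | [] => some [1]
  | (a, b, c) :: L => (evalTwo i j L).bind fun p =>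
    if a = b then some (mul c.diag p)
    else if a = i ∧ b = j then some (mul c.bwd p)
    else if a = j ∧ b = i then some (mul c.fwd p)
    else none

/-- The value of a series-parallel network, summed over the vertices in `U`. -/
def evalNetwork (i j : ι) : ℕ → List ι → List (ι × ι × Weight) → Option (List ℤ)
  | 0, U, L => if U = [] then evalTwo i j L else none
  | k + 1, U, L =>
    (U.findSome? fun u => (eliminate u L).map fun L' => (u, L')).bind fun R =>
      evalNetwork i j k (U.filter (· ≠ R.1)) R.2

/-- Renames `a` to `b` in a list of pairs. -/
def rename (a b : ι) (L : List (ι × ι)) : List (ι × ι) :=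
  L.map fun e => (if e.1 = a then b else e.1, if e.2 = a then b else e.2)

/-- Deletion-contraction on the pairs `D` required to be distinct. -/
def countMaps (i j : ι) : ℕ → List ι → List (ι × ι) → List (ι × ι) → Option (List ℤ)
  | k, U, E, D =>
    if ∃ e ∈ E, (e.2, e.1) ∈ E then some []
    else match k, D with
    | _, [] => evalNetwork i j U.length U (E.map fun e => (e.1, e.2, .arc))
    | 0, _ :: _ => none
    | k + 1, (a, b) :: D =>
      if (a, b) ∈ E ∨ (b, a) ∈ E then countMaps i j k U E D
      else if a = b then some []
      else if a ∈ U then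
        (countMaps i j k U E D).bind fun p =>
          (countMaps i j k (U.filter (· ≠ a)) (rename a b E) (rename a b D)).map fun q =>
            add p (scale (-1) q)
      else if b ∈ U then
        (countMaps i j k U E D).bind fun p =>
          (countMaps i j k (U.filter (· ≠ b)) (rename b a E) (rename b a D)).map fun q =>
            add p (scale (-1) q)
      else none

end Network

/-- The arcs of the directed `8`-cycle. -/
def cycleArcs : List (Fin 8 × Fin 8) := (List.finRange 8).map fun k => (k, k + 1)

/-- The unordered pairs of vertices of the `8`-cycle. -/
def cyclePairs : List (Fin 8 × Fin 8) :=
  (List.finRange 8 ×ˢ List.finRange 8).filter fun e => e.1 < e.2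

lemma evalAt_add (t : ℤ) (p q : List ℤ) : evalAt t (add p q) = evalAt t p + evalAt t q := by
  induction p generalizing q with
  | nil => simp [add, evalAt]
  | cons c p ih =>
    cases q with
    | nil => simp [add, evalAt]
    | cons d q => simp only [add, evalAt, ih]; ring

lemma evalAt_scale (t c : ℤ) (p : List ℤ) : evalAt t (scale c p) = c * evalAt t p := by
  induction p with
  | nil => simp [scale, evalAt]
  | cons d p ih =>
    simp only [scale, List.map_cons, evalAt] at ih ⊢
    rw [ih]; ring

lemma evalAt_mul (t : ℤ) (p q : List ℤ) : evalAt t (mul p q) = evalAt t p * evalAt t q := by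
  induction p with
  | nil => simp [mul, evalAt]
  | cons c p ih => simp only [mul, evalAt, evalAt_add, evalAt_scale, ih]; ring

namespace Tournament

variable {V : Type*} (T : Tournament V)

/-- The adjacency matrix. -/
def adj (x y : V) : ℤ := if T.r x y then 1 else 0

lemma adj_mul_self (x y : V) : T.adj x y * T.adj x y = T.adj x y := by
  simp [adj]

lemma IsDoublyRegular.sum_adj_mul_adj {T : Tournament V} [Fintype V] {t : ℕ}
    (hT : T.IsDoublyRegular t) {x z : V} (h : x ≠ z) :
    ∑ y, T.adj x y * T.adj z y = t := by
  rw [← hT x z h, Nat.card_eq_fintype_card, Fintype.card_subtype]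
  simp [adj, ← ite_and, Finset.sum_boole, and_comm]

variable [DecidableEq V]

lemma adj_add_adj (x y : V) : T.adj x y + T.adj y x + (if x = y then 1 else 0) = 1 := by
  by_cases h : x = y
  · subst h; simp [adj, T.irrefl]
  · have := T.total x y h
    by_cases h' : T.r x y <;> simp_all [adj]

/-- The value of a weight on a pair of vertices. -/
def weight (t : ℕ) (w : Weight) (x y : V) : ℤ :=
  if x = y then evalAt t w.diag else if T.r x y then evalAt t w.fwd else evalAt t w.bwd

lemma weight_eq (t : ℕ) (w : Weight) (x y : V) :
    T.weight t w x y = evalAt t w.diag * (if x = y then 1 else 0) + evalAt t w.fwd * T.adj x y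
      + evalAt t w.bwd * T.adj y x := by
  by_cases h : x = y
  · subst h; simp [weight, adj, T.irrefl]
  · have := T.total x y h
    by_cases h' : T.r x y <;> simp_all [weight, adj]

lemma weight_self (t : ℕ) (w : Weight) (x : V) : T.weight t w x x = evalAt t w.diag := by
  simp [weight]

lemma weight_one (t : ℕ) (x y : V) : T.weight t .one x y = 1 := by
  simp [weight, Weight.one, evalAt]

lemma weight_arc (t : ℕ) (x y : V) : T.weight t .arc x y = T.adj x y := by
  simp [weight_eq, Weight.arc, evalAt]

lemma weight_swap (t : ℕ) (w : Weight) (x y : V) :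
    T.weight t w.swap x y = T.weight t w y x := by
  simp only [weight_eq, Weight.swap, eq_comm (a := x)]
  ring

lemma weight_hadamard (t : ℕ) (w w' : Weight) (x y : V) :
    T.weight t (w.hadamard w') x y = T.weight t w x y * T.weight t w' x y := by
  unfold weight
  split_ifs <;> simp [Weight.hadamard, evalAt_mul]

variable {T} [Fintype V] {t : ℕ}

/-- The out-degrees of a doubly regular tournament take only the values `0` and `2t + 1`. -/
lemma IsDoublyRegular.outDegree_eq_or (hT : T.IsDoublyRegular t) (x : V) :
    ∑ y, T.adj x y = 0 ∨ ∑ y, T.adj x y = 2 * t + 1 := by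
  set d := ∑ y, T.adj x y with hd
  have inner (z : V) : T.adj x z * ∑ y, T.adj x y * T.adj z y = T.adj x z * t := by
    by_cases h : x = z
    · subst h; simp [adj, T.irrefl]
    · rw [hT.sum_adj_mul_adj h]
  have h1 : ∑ z, ∑ y, T.adj x z * T.adj x y * T.adj z y = d * t := by
    rw [hd, Finset.sum_mul]
    refine Finset.sum_congr rfl fun z _ => ?_
    rw [← inner z, Finset.mul_sum]
    exact Finset.sum_congr rfl fun y _ => by ring
  have h2 : ∑ z, ∑ y, T.adj x z * T.adj x y * T.adj y z = d * t := by
    rw [Finset.sum_comm, ← h1]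
    exact Finset.sum_congr rfl fun z _ => Finset.sum_congr rfl fun y _ => by ring
  have h3 : ∑ z, ∑ y, T.adj x z * T.adj x y * (if z = y then 1 else 0) = d := by
    simp [T.adj_mul_self, hd]
  have h4 : ∑ z, ∑ y, T.adj x z * T.adj x y = d * d := by
    rw [hd, Finset.sum_mul_sum]
  have h5 : d * d = d * t + d * t + d := by
    conv_rhs => rw [← h3]
    conv_rhs => enter [1, 1]; rw [h3, ← h1]
    conv_rhs => enter [1, 2]; rw [h3, ← h2]
    rw [← h4, ← Finset.sum_add_distrib, ← Finset.sum_add_distrib]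
    refine Finset.sum_congr rfl fun z _ => ?_
    rw [← Finset.sum_add_distrib, ← Finset.sum_add_distrib]
    refine Finset.sum_congr rfl fun y _ => ?_
    linear_combination -(T.adj x z * T.adj x y) * T.adj_add_adj z y
  have h6 : d * (d - (2 * t + 1)) = 0 := by linear_combination h5
  rcases mul_eq_zero.mp h6 with h | h
  · exact .inl h
  · exact .inr (by linarith)

/-- Doubly regular tournaments are regular. -/
lemma IsDoublyRegular.sum_adj (hT : T.IsDoublyRegular t) (hV : Fintype.card V = 4 * t + 3)
    (x : V) : ∑ y, T.adj x y = 2 * t + 1 := by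
  have hle (x : V) : ∑ y, T.adj x y ≤ 2 * t + 1 := by
    rcases hT.outDegree_eq_or x with h | h <;> rw [h]
    positivity
  have h1 : ∑ x, ∑ y, (T.adj x y + T.adj y x + (if x = y then 1 else 0)) =
      (4 * t + 3 : ℤ) * (4 * t + 3) := by
    simp [adj_add_adj, hV]
  have h2 : ∑ x, ∑ y, T.adj x y = ∑ x : V, (2 * t + 1 : ℤ) := by
    simp only [Finset.sum_add_distrib] at h1
    rw [Finset.sum_comm (f := fun x y => T.adj y x)] at h1
    simp [hV] at h1 ⊢
    linarith
  exact (Finset.sum_eq_sum_iff_of_le fun x _ => hle x).mp h2 x (Finset.mem_univ x)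

lemma IsDoublyRegular.sum_adj_left (hT : T.IsDoublyRegular t) (hV : Fintype.card V = 4 * t + 3)
    (x : V) : ∑ y, T.adj y x = 2 * t + 1 := by
  have h1 : ∑ y, (T.adj x y + T.adj y x + (if x = y then 1 else 0)) = (4 * t + 3 : ℤ) := by
    simp [adj_add_adj, hV]
  simp only [Finset.sum_add_distrib, hT.sum_adj hV x] at h1
  simp at h1
  linarith

/-- `A Aᵀ = (t + 1) I + t J`. -/
lemma IsDoublyRegular.adj_mul_transpose (hT : T.IsDoublyRegular t)
    (hV : Fintype.card V = 4 * t + 3) (x z : V) :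
    ∑ y, T.adj x y * T.adj z y = t + (t + 1) * (if x = z then 1 else 0) := by
  by_cases h : x = z
  · subst h
    simp only [adj_mul_self, hT.sum_adj hV, if_pos]
    ring
  · simp [hT.sum_adj_mul_adj h, h]

/-- `A² = t A + (t + 1) Aᵀ`. -/
lemma IsDoublyRegular.adj_mul_adj (hT : T.IsDoublyRegular t)
    (hV : Fintype.card V = 4 * t + 3) (x z : V) :
    ∑ y, T.adj x y * T.adj y z = t * T.adj x z + (t + 1) * T.adj z x := by
  have h : ∑ y, T.adj x y * (T.adj y z + T.adj z y + (if y = z then 1 else 0)) = 2 * t + 1 := by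
    simp only [adj_add_adj, mul_one, hT.sum_adj hV]
  simp only [mul_add, Finset.sum_add_distrib, hT.adj_mul_transpose hV] at h
  simp only [mul_ite, mul_one, mul_zero, Finset.sum_ite_eq', Finset.mem_univ, if_true] at h
  have := T.adj_add_adj x z
  split_ifs at h this <;> linear_combination h - (t + 1) * this

/-- `Aᵀ A = (t + 1) I + t J`. -/
lemma IsDoublyRegular.transpose_mul_adj (hT : T.IsDoublyRegular t)
    (hV : Fintype.card V = 4 * t + 3) (x z : V) :
    ∑ y, T.adj y x * T.adj y z = t + (t + 1) * (if x = z then 1 else 0) := by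
  have h : ∑ y, (T.adj x y + T.adj y x + (if x = y then 1 else 0)) * T.adj y z = 2 * t + 1 := by
    simp only [adj_add_adj, one_mul, hT.sum_adj_left hV]
  simp only [add_mul, Finset.sum_add_distrib, hT.adj_mul_adj hV] at h
  simp only [ite_mul, one_mul, zero_mul, Finset.sum_ite_eq, Finset.mem_univ, if_true] at h
  linear_combination h - (t + 1) * T.adj_add_adj x z

lemma IsDoublyRegular.weight_comp (hT : T.IsDoublyRegular t) (hV : Fintype.card V = 4 * t + 3)
    (w w' : Weight) (x z : V) :
    T.weight t (w.comp w') x z = ∑ y, T.weight t w x y * T.weight t w' y z := by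
  have key : ∑ y, T.weight t w x y * T.weight t w' y z =
      evalAt t w.diag * T.weight t w' x z
      + evalAt t w'.diag * (evalAt t w.fwd * T.adj x z + evalAt t w.bwd * T.adj z x)
      + evalAt t w.fwd * evalAt t w'.fwd * ∑ y, T.adj x y * T.adj y z
      + evalAt t w.fwd * evalAt t w'.bwd * ∑ y, T.adj x y * T.adj z y
      + evalAt t w.bwd * evalAt t w'.fwd * ∑ y, T.adj y x * T.adj y z
      + evalAt t w.bwd * evalAt t w'.bwd * ∑ y, T.adj z y * T.adj y x := by
    have h1 : evalAt t w.diag * T.weight t w' x z =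
        ∑ y, evalAt t w.diag * (if x = y then 1 else 0) * T.weight t w' y z := by simp
    have h2 : evalAt t w'.diag * (evalAt t w.fwd * T.adj x z + evalAt t w.bwd * T.adj z x) =
        ∑ y, evalAt t w'.diag * (evalAt t w.fwd * T.adj x y + evalAt t w.bwd * T.adj y x)
          * (if y = z then 1 else 0) := by simp
    rw [h1, h2]
    simp only [Finset.mul_sum, ← Finset.sum_add_distrib]
    refine Finset.sum_congr rfl fun y _ => ?_
    simp only [weight_eq]
    ring
  rw [key, hT.adj_mul_adj hV, hT.adj_mul_adj hV, hT.adj_mul_transpose hV, hT.transpose_mul_adj hV]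
  simp only [weight_eq, Weight.comp, evalAt_add, evalAt_mul, evalAt]
  linear_combination (t : ℤ) * (evalAt t w.fwd * evalAt t w'.bwd +
    evalAt t w.bwd * evalAt t w'.fwd) * T.adj_add_adj x z

end Tournament

namespace Tournament

variable {V ι : Type*} [DecidableEq V]

variable (T : Tournament V) (t : ℕ)

/-- The product of the weights of the edges of a network. -/
def networkVal (L : List (ι × ι × Weight)) (w : ι → V) : ℤ :=
  (L.map fun e => T.weight t e.2.2 (w e.1) (w e.2.1)).prod

/-- The indicator of the maps which send all pairs of `E` to arcs and all pairs of `D` to pairs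
of distinct vertices. -/
def mapVal (E D : List (ι × ι)) (w : ι → V) : ℤ :=
  if (∀ e ∈ E, T.r (w e.1) (w e.2)) ∧ ∀ d ∈ D, w d.1 ≠ w d.2 then 1 else 0

lemma networkVal_arcs (E : List (ι × ι)) (w : ι → V) :
    T.networkVal t (E.map fun e => (e.1, e.2, .arc)) w = T.mapVal E [] w := by
  induction E with
  | nil => simp [networkVal, mapVal]
  | cons e E ih =>
    rw [networkVal] at ih
    rw [networkVal, List.map_cons, List.map_cons, List.prod_cons, ih]
    rw [weight_arc, adj]
    by_cases h : T.r (w e.1) (w e.2)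
    · rw [if_pos h, one_mul]
      exact if_congr (by simp [h]) rfl rfl
    · rw [if_neg h, zero_mul, mapVal, if_neg fun H => h (H.1 _ List.mem_cons_self)]

lemma mapVal_cons (E D : List (ι × ι)) (a b : ι) (w : ι → V) :
    T.mapVal E ((a, b) :: D) w = if w a ≠ w b then T.mapVal E D w else 0 := by
  by_cases h : w a = w b
  · rw [mapVal, if_neg fun H => H.2 _ List.mem_cons_self h, if_neg (not_not.mpr h)]
  · rw [if_pos h]
    exact if_congr (by simp [h]) rfl rfl

variable {T t}

lemma mapVal_cons_swap (E D : List (ι × ι)) (a b : ι) :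
    T.mapVal (V := V) E ((a, b) :: D) = T.mapVal E ((b, a) :: D) := by
  funext w
  simp only [mapVal_cons, ne_comm]

lemma mapVal_cons_of_mem {E D : List (ι × ι)} {a b : ι} (h : (a, b) ∈ E ∨ (b, a) ∈ E) :
    T.mapVal (V := V) E ((a, b) :: D) = T.mapVal E D := by
  funext w
  refine if_congr (and_congr_right fun hE => ?_) rfl rfl
  rw [List.forall_mem_cons]
  refine and_iff_right fun hab => ?_
  rcases h with h | h <;> have := hE _ h <;> simp only [hab] at this <;>
    exact T.irrefl _ this

variable [DecidableEq ι]

lemma networkVal_splitAt {u p q : ι} (hp : p ≠ u) (hq : q ≠ u) {L : List (ι × ι × Weight)}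
    {R : Weight × Weight × List (ι × ι × Weight)} (h : splitAt u p q L = some R)
    (w : ι → V) (x : V) :
    T.networkVal t L (Function.update w u x) =
      T.weight t R.1 x (w p) * T.weight t R.2.1 x (w q) * T.networkVal t R.2.2 w := by
  induction L generalizing R with
  | nil =>
    simp only [splitAt, Option.some.injEq] at h
    subst h
    simp [networkVal, weight_one]
  | cons e L ih =>
    obtain ⟨a, b, c⟩ := e
    simp only [splitAt, Option.bind_eq_some_iff] at h
    obtain ⟨R', hR', h⟩ := h
    have ih := ih hR'
    have hcons (w : ι → V) (e : ι × ι × Weight) (L : List (ι × ι × Weight)) :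
        T.networkVal t (e :: L) w =
          T.weight t e.2.2 (w e.1) (w e.2.1) * T.networkVal t L w := by simp [networkVal]
    rw [hcons, ih]
    split_ifs at h <;> simp only [Option.some.injEq] at h <;> subst h <;>
      simp_all [Function.update_of_ne, weight_hadamard, weight_swap, weight_self] <;> ring

lemma evalTwo_spec {i j : ι} {v : ι → V} (hv : T.r (v j) (v i)) {L : List (ι × ι × Weight)}
    {p : List ℤ} (h : evalTwo i j L = some p) : T.networkVal t L v = evalAt t p := by
  have hne : v j ≠ v i := fun h => T.irrefl (v i) (by rwa [h] at hv)
  have hr : ¬ T.r (v i) (v j) := (T.total _ _ hne).mp hv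
  induction L generalizing p with
  | nil =>
    simp only [evalTwo, Option.some.injEq] at h
    subst h
    simp [networkVal, evalAt]
  | cons e L ih =>
    obtain ⟨a, b, c⟩ := e
    simp only [evalTwo, Option.bind_eq_some_iff] at h
    obtain ⟨q, hq, h⟩ := h
    have ih := ih hq
    rw [networkVal] at ih
    rw [networkVal, List.map_cons, List.prod_cons, ih]
    split_ifs at h with h1 h2 h3 <;> simp only [Option.some.injEq] at h <;> subst h <;>
      rw [evalAt_mul]
    · rw [h1, weight_self]
    · simp [h2.1, h2.2, weight, hne.symm, hr]
    · simp [h3.1, h3.2, weight, hne, hv]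

variable (T)

lemma mapVal_rename (E D : List (ι × ι)) (a b : ι) (w : ι → V) :
    T.mapVal (rename a b E) (rename a b D) w =
      T.mapVal E D (Function.update w a (w b)) := by
  have h (c : ι) : w (if c = a then b else c) = Function.update w a (w b) c := by
    by_cases hc : c = a
    · subst hc; simp
    · simp [hc]
  simp only [mapVal, rename, List.forall_mem_map, h]

variable {T}

variable [Fintype V]

lemma IsDoublyRegular.sum_networkVal (hT : T.IsDoublyRegular t)
    (hV : Fintype.card V = 4 * t + 3) {u : ι} {L L' : List (ι × ι × Weight)}
    (h : eliminate u L = some L') (w : ι → V) :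
    ∑ x, T.networkVal t L (Function.update w u x) = T.networkVal t L' w := by
  simp only [eliminate, Option.bind_eq_some_iff, seriesReduce] at h
  obtain ⟨p, -, h⟩ := h
  generalize (Option.getD _ p) = q at h
  split_ifs at h with hpq
  rw [not_or] at hpq
  obtain ⟨R, hR, rfl⟩ := Option.map_eq_some_iff.mp h
  simp only [networkVal_splitAt hpq.1 hpq.2 hR, ← Finset.sum_mul]
  simp [networkVal, hT.weight_comp hV, weight_swap]

variable [Fintype ι]

/-- The sum of `F` over all maps which agree with `v` outside `U`. -/
def sumFree (U : List ι) (F : (ι → V) → ℤ) (v : ι → V) : ℤ :=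
  ∑ w with ∀ k, k ∉ U → w k = v k, F w

lemma sumFree_congr {U : List ι} {F G : (ι → V) → ℤ} {v : ι → V}
    (h : ∀ w : ι → V, (∀ k, k ∉ U → w k = v k) → F w = G w) :
    sumFree U F v = sumFree U G v :=
  Finset.sum_congr rfl fun w hw => h w (by simpa using hw)

lemma sumFree_nil (F : (ι → V) → ℤ) (v : ι → V) : sumFree [] F v = F v := by
  have : (Finset.univ.filter fun w : ι → V => ∀ k, k ∉ ([] : List ι) → w k = v k) = {v} := by
    ext w
    simp [funext_iff]
  rw [sumFree, this, Finset.sum_singleton]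

lemma sumFree_of_mem {U : List ι} {u : ι} (hu : u ∈ U) (F : (ι → V) → ℤ) (v : ι → V) :
    sumFree U F v =
      sumFree (U.filter (· ≠ u)) (fun w => ∑ x, F (Function.update w u x)) v := by
  unfold sumFree
  rw [← Finset.sum_product']
  refine Finset.sum_nbij' (fun w => (Function.update w u (v u), w u))
    (fun p => Function.update p.1 u p.2) ?_ ?_ ?_ ?_ ?_
  · intro w hw
    simp only [Finset.mem_filter, Finset.mem_univ, true_and, Finset.mem_product, and_true,
      List.mem_filter, decide_eq_true_eq, not_and_or, not_not] at hw ⊢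
    intro k hk
    by_cases h : k = u
    · subst h; simp
    · rw [Function.update_of_ne h]
      exact hw k (hk.resolve_right h)
  · rintro ⟨w, x⟩ hw
    simp only [Finset.mem_filter, Finset.mem_univ, true_and, Finset.mem_product, and_true,
      List.mem_filter, decide_eq_true_eq, not_and_or, not_not] at hw ⊢
    intro k hk
    have h : k ≠ u := fun h => hk (h ▸ hu)
    rw [Function.update_of_ne h]
    exact hw k (.inl hk)
  · intro w _
    simp
  · rintro ⟨w, x⟩ hw
    simp only [Finset.mem_filter, Finset.mem_univ, true_and, Finset.mem_product, and_true,
      List.mem_filter, decide_eq_true_eq, not_and_or, not_not] at hw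
    simp [← hw u (.inr rfl)]
  · intro w _
    simp

/-- Deletion-contraction. -/
lemma sumFree_ne {U : List ι} {a b : ι} (ha : a ∈ U) (hab : a ≠ b) (F : (ι → V) → ℤ)
    (v : ι → V) :
    sumFree U (fun w => if w a ≠ w b then F w else 0) v =
      sumFree U F v -
        sumFree (U.filter (· ≠ a)) (fun w => F (Function.update w a (w b))) v := by
  have h : sumFree (U.filter (· ≠ a)) (fun w => F (Function.update w a (w b))) v =
      sumFree U (fun w => if w a = w b then F w else 0) v := by
    rw [sumFree_of_mem ha]
    refine sumFree_congr fun w _ => ?_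
    simp [Function.update_of_ne hab.symm]
  rw [h]
  unfold sumFree
  rw [← Finset.sum_sub_distrib]
  refine Finset.sum_congr rfl fun w _ => ?_
  split_ifs <;> simp_all

lemma IsDoublyRegular.evalNetwork_spec (hT : T.IsDoublyRegular t)
    (hV : Fintype.card V = 4 * t + 3) {i j : ι} {v : ι → V} (hv : T.r (v j) (v i)) {k : ℕ}
    {U : List ι} {L : List (ι × ι × Weight)} {p : List ℤ} (h : evalNetwork i j k U L = some p) :
    sumFree U (T.networkVal t L) v = evalAt t p := by
  induction k generalizing U L with
  | zero =>
    simp only [evalNetwork] at h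
    split_ifs at h with hU
    rw [hU, sumFree_nil, evalTwo_spec hv h]
  | succ k ih =>
    simp only [evalNetwork, Option.bind_eq_some_iff] at h
    obtain ⟨⟨u, L'⟩, hu, h⟩ := h
    obtain ⟨u', hu', hL⟩ := List.exists_of_findSome?_eq_some hu
    simp only [Option.map_eq_some_iff, Prod.mk.injEq] at hL
    obtain ⟨L'', hL, rfl, rfl⟩ := hL
    rw [sumFree_of_mem hu', ← ih h]
    exact sumFree_congr fun w _ => hT.sum_networkVal hV hL w

lemma sumFree_mapVal_cons {U : List ι} {a b : ι} (ha : a ∈ U) (hab : a ≠ b) {p q : List ℤ}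
    {E D : List (ι × ι)} {v : ι → V} (hp : sumFree U (T.mapVal E D) v = evalAt t p)
    (hq : sumFree (U.filter (· ≠ a)) (T.mapVal (rename a b E) (rename a b D)) v = evalAt t q) :
    sumFree U (T.mapVal E ((a, b) :: D)) v = evalAt t (add p (scale (-1) q)) := by
  have h : sumFree U (T.mapVal E ((a, b) :: D)) v =
      sumFree U (fun w => if w a ≠ w b then T.mapVal E D w else 0) v :=
    sumFree_congr fun w _ => T.mapVal_cons E D a b w
  have h' : sumFree (U.filter (· ≠ a)) (T.mapVal (rename a b E) (rename a b D)) v =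
      sumFree (U.filter (· ≠ a)) (fun w => T.mapVal E D (Function.update w a (w b))) v :=
    sumFree_congr fun w _ => T.mapVal_rename E D a b w
  rw [h, sumFree_ne ha hab, ← h', hp, hq, evalAt_add, evalAt_scale]
  ring

lemma sumFree_zero (U : List ι) (v : ι → V) : sumFree U 0 v = 0 := by simp [sumFree]

theorem IsDoublyRegular.countMaps_spec (hT : T.IsDoublyRegular t)
    (hV : Fintype.card V = 4 * t + 3) {i j : ι} {v : ι → V} (hv : T.r (v j) (v i)) {k : ℕ}
    {U : List ι} {E D : List (ι × ι)} {p : List ℤ} (h : countMaps i j k U E D = some p) :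
    sumFree U (T.mapVal E D) v = evalAt t p := by
  fun_induction countMaps i j k U E D generalizing p with
  | case1 _ _ E _ hE =>
    obtain rfl := Option.some.inj h
    obtain ⟨e, he, he'⟩ := hE
    rw [evalAt, ← sumFree_zero _ v]
    refine sumFree_congr fun w _ => if_neg fun H => ?_
    have h1 := H.1 _ he
    have h2 := H.1 _ he'
    refine (T.total _ _ fun h => ?_).mp h1 h2
    rw [h] at h1
    exact T.irrefl _ h1
  | case2 =>
    rw [← hT.evalNetwork_spec hV hv h]
    exact sumFree_congr fun w _ => (T.networkVal_arcs t _ w).symm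
  | case3 => simp at h
  | case4 _ _ _ _ _ _ _ hab ih =>
    rw [mapVal_cons_of_mem hab]
    exact ih h
  | case5 =>
    obtain rfl := Option.some.inj h
    rw [evalAt, ← sumFree_zero _ v]
    exact sumFree_congr fun w _ => by simp [mapVal_cons]
  | case6 _ _ _ _ _ _ _ _ hab ha ih ih' =>
    obtain ⟨p, hp, h⟩ := Option.bind_eq_some_iff.mp h
    obtain ⟨q, hq, rfl⟩ := Option.map_eq_some_iff.mp h
    exact sumFree_mapVal_cons ha hab (ih hp) (ih' hq)
  | case7 _ _ _ _ _ _ _ _ hab _ hb ih ih' =>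
    obtain ⟨p, hp, h⟩ := Option.bind_eq_some_iff.mp h
    obtain ⟨q, hq, rfl⟩ := Option.map_eq_some_iff.mp h
    rw [mapVal_cons_swap]
    exact sumFree_mapVal_cons hb (Ne.symm hab) (ih hp) (ih' hq)
  | case8 => simp at h

end Tournament

lemma countMaps_cycleArcs : countMaps (0 : Fin 8) 7 28 [1, 2, 3, 4, 5, 6] cycleArcs [] =
    some [0, 2, 20, 64, 102, 88, 32] := by
  decide +kernel

lemma countMaps_cycleArcs_cyclePairs :
    countMaps (0 : Fin 8) 7 28 [1, 2, 3, 4, 5, 6] cycleArcs cyclePairs =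
      some [0, 0, 22, 8, -54, -8, 32] := by
  decide +kernel

lemma forall_cycleArcs {p : Fin 8 → Fin 8 → Prop} :
    (∀ e ∈ cycleArcs, p e.1 e.2) ↔ (∀ k : Fin 7, p k.castSucc k.succ) ∧ p 7 0 := by
  simp only [cycleArcs, List.forall_mem_map, List.mem_finRange, forall_const]
  rw [Fin.forall_fin_succ']
  simp [Fin.coeSucc_eq_succ]

lemma forall_cyclePairs {α : Type*} {f : Fin 8 → α} :
    (∀ e ∈ cyclePairs, f e.1 ≠ f e.2) ↔ Function.Injective f := by
  refine ⟨fun h => ?_, fun h e he hf => ?_⟩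
  · have mem {a b : Fin 8} (hab : a < b) : (a, b) ∈ cyclePairs := by simp [cyclePairs, hab]
    intro a b hab
    by_contra hne
    rcases lt_or_gt_of_ne hne with hlt | hlt
    · exact h _ (mem hlt) hab
    · exact h _ (mem hlt) hab.symm
  · simp only [cyclePairs, List.mem_filter, decide_eq_true_eq] at he
    exact he.2.ne (h hf)

theorem non_path_seven_walks_of_doubly_regular
    (t : ℕ) (T : Tournament (Fin (4 * t + 3)))
    (hDR : T.IsDoublyRegular t)
    (i j : Fin (4 * t + 3)) (harc : T.r j i) :
    -- walks of length 7 from `i` to `j` that are not paths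
    (Nat.card {v : Fin 8 → Fin (4 * t + 3) //
        v 0 = i ∧ v 7 = j ∧ (∀ k : Fin 7, T.r (v k.castSucc) (v k.succ)) ∧
        ¬ Function.Injective v} : ℤ)
      = 2 * (t : ℤ) * ((t : ℤ) + 1) *
          (48 * (t : ℤ) ^ 3 + 30 * (t : ℤ) ^ 2 - 2 * (t : ℤ) + 1) := by
  set v : Fin 8 → Fin (4 * t + 3) := fun k => if k = 7 then j else i with hv
  have hvr : T.r (v 7) (v 0) := by simpa [hv] using harc
  have hV : Fintype.card (Fin (4 * t + 3)) = 4 * t + 3 := Fintype.card_fin _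
  have hfree (w : Fin 8 → Fin (4 * t + 3)) :
      (∀ k, k ∉ ([1, 2, 3, 4, 5, 6] : List (Fin 8)) → w k = v k) ↔ w 0 = i ∧ w 7 = j := by
    simp [Fin.forall_fin_succ, hv]
  have hval (w : Fin 8 → Fin (4 * t + 3)) (h0 : w 0 = i) (h7 : w 7 = j) :
      T.mapVal cycleArcs [] w - T.mapVal cycleArcs cyclePairs w =
        if (∀ k : Fin 7, T.r (w k.castSucc) (w k.succ)) ∧ ¬ Function.Injective w
          then 1 else 0 := by
    have h : T.r (w 7) (w 0) := by rwa [h0, h7]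
    simp only [Tournament.mapVal, forall_cyclePairs,
      forall_cycleArcs (p := fun a b => T.r (w a) (w b)), h, and_true]
    split_ifs <;> simp_all
  have hcard : (Nat.card {v : Fin 8 → Fin (4 * t + 3) //
        v 0 = i ∧ v 7 = j ∧ (∀ k : Fin 7, T.r (v k.castSucc) (v k.succ)) ∧
        ¬ Function.Injective v} : ℤ) =
      Tournament.sumFree [1, 2, 3, 4, 5, 6] (T.mapVal cycleArcs []) v -
        Tournament.sumFree [1, 2, 3, 4, 5, 6] (T.mapVal cycleArcs cyclePairs) v := by
    simp only [Tournament.sumFree, ← Finset.sum_sub_distrib, hfree]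
    rw [Finset.sum_congr rfl fun w hw =>
      hval w (Finset.mem_filter.mp hw).2.1 (Finset.mem_filter.mp hw).2.2, Finset.sum_boole,
      Finset.filter_filter, Nat.card_eq_fintype_card, Fintype.card_subtype]
    simp only [and_assoc]
  rw [hcard, hDR.countMaps_spec hV hvr countMaps_cycleArcs,
    hDR.countMaps_spec hV hvr countMaps_cycleArcs_cyclePairs]
  simp only [evalAt]
  ring
end
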